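/- arXiv:2107.03004 — 5 statements merged into one kernel-verified Lean document; each statement's English description precedes it below -/
import Mathlib

section
/- Let n ≥ 1 and let M be an n × n matrix over a commutative ring (e.g. the reals). Let C be the matrix of cofactors of M, i.e. C_{ij} = (-1)^{i+j} M_{ij} where M_{ij} is the (i,j)-minor of M (the determinant of M with row i and column j deleted). Then for every k with 1 ≤ k ≤ n, the determinant of the upper-left k × k block (c_{ij})_{i,j=1,...,k} of C equals (det M)^{k-1} times the determinant of the lower-right (n-k) × (n-k) block (a_{ij})_{i,j=k+1,...,n} of M. -/
/-!
For a block matrix `N = (A B; E D)` with adjugate `(P Q; S T)`, the first block column of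
`N * adjugate N = det N • 1` gives

  `N * (P 0; S 1) = (det N • 1  B; 0  D)`.

Taking determinants yields `det N * det P = (det N) ^ k * det D`, where `k` is the size of `P`,
and the claim follows by cancelling one factor `det N`. Cancellation is legitimate for the generic
matrix over a polynomial ring over `ℤ`, whose determinant is nonzero; every matrix over a
commutative ring is a specialization of the generic one. The cofactor matrix is the transpose of
the adjugate, so its leading block has the same determinant as that of the adjugate.
-/

namespace JacobiCofactor

open Matrix

variable {m p R : Type*} [Fintype m] [DecidableEq m] [Fintype p] [DecidableEq p] [CommRing R]

/-- The block form of the identity before cancelling one factor `det N`. -/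
lemma det_mul_det_toBlocks₁₁_adjugate (N : Matrix (m ⊕ p) (m ⊕ p) R) :
    N.det * N.adjugate.toBlocks₁₁.det = N.det ^ Fintype.card m * N.toBlocks₂₂.det := by
  have key : N * fromBlocks N.adjugate.toBlocks₁₁ 0 N.adjugate.toBlocks₂₁ 1 =
      fromBlocks (N.det • (1 : Matrix m m R)) N.toBlocks₁₂ 0 N.toBlocks₂₂ := by
    have h := N.mul_adjugate
    rw [← fromBlocks_toBlocks N.adjugate] at h
    nth_rw 1 [← fromBlocks_toBlocks N] at h ⊢
    rw [fromBlocks_multiply, ← fromBlocks_one, fromBlocks_smul, fromBlocks_inj] at h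
    rw [fromBlocks_multiply, h.1, h.2.2.1]
    simp
  have := congrArg det key
  simpa [det_fromBlocks_zero₁₂, det_fromBlocks_zero₂₁, det_smul] using this

/-- Jacobi's identity for the leading block of the adjugate of a block matrix. -/
lemma det_toBlocks₁₁_adjugate [Nonempty m] (N : Matrix (m ⊕ p) (m ⊕ p) R) :
    N.adjugate.toBlocks₁₁.det = N.det ^ (Fintype.card m - 1) * N.toBlocks₂₂.det := by
  let X := mvPolynomialX (m ⊕ p) (m ⊕ p) ℤ
  have hX : X.adjugate.toBlocks₁₁.det = X.det ^ (Fintype.card m - 1) * X.toBlocks₂₂.det := by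
    refine mul_left_cancel₀ (det_mvPolynomialX_ne_zero (m ⊕ p) ℤ) ?_
    rw [← mul_assoc, mul_pow_sub_one Fintype.card_ne_zero]
    exact det_mul_det_toBlocks₁₁_adjugate X
  let f := MvPolynomial.eval₂Hom (Int.castRingHom R) fun q : (m ⊕ p) × (m ⊕ p) => N q.1 q.2
  have hN : f.mapMatrix X = N := by
    ext i j
    simp [X, f]
  have h := congrArg f hX
  rw [map_mul, map_pow, RingHom.map_det, RingHom.map_det, RingHom.map_det, hN] at h
  have h₁ : f.mapMatrix X.adjugate.toBlocks₁₁ = N.adjugate.toBlocks₁₁ := by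
    rw [← hN, ← RingHom.map_adjugate]
    rfl
  have h₂ : f.mapMatrix X.toBlocks₂₂ = N.toBlocks₂₂ := by
    rw [← hN]
    rfl
  rwa [h₁, h₂] at h

end JacobiCofactor

/-- **Jacobi identity for cofactors.** Let `M` be an `(n+1) × (n+1)` matrix over a
commutative ring (so the size is an arbitrary integer `≥ 1`) and let `C` be its matrix
of cofactors, `C i j = (-1)^(i+j) * det (M with row i and column j deleted)`.
Then for every `k` with `1 ≤ k ≤ n+1`, the determinant of the upper-left `k × k`
block of `C` equals `(det M)^(k-1)` times the determinant of the lower-right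
`(n+1-k) × (n+1-k)` block of `M`. -/
theorem jacobi_identity_for_cofactors {R : Type*} [CommRing R] (n : ℕ)
    (M : Matrix (Fin (n + 1)) (Fin (n + 1)) R)
    (C : Matrix (Fin (n + 1)) (Fin (n + 1)) R)
    (hC : ∀ i j : Fin (n + 1),
      C i j = (-1 : R) ^ (i.val + j.val) *
        (M.submatrix i.succAbove j.succAbove).det)
    (k : ℕ) (hk1 : 1 ≤ k) (hk : k ≤ n + 1) :
    (Matrix.of fun i j : Fin k =>
        C (Fin.castLE hk i) (Fin.castLE hk j)).det =
      M.det ^ (k - 1) *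
        (Matrix.of fun i j : Fin (n + 1 - k) =>
          M ⟨k + i.val, by have := i.isLt; omega⟩
            ⟨k + j.val, by have := j.isLt; omega⟩).det := by
  have : Nonempty (Fin k) := ⟨⟨0, hk1⟩⟩
  let e : Fin k ⊕ Fin (n + 1 - k) ≃ Fin (n + 1) :=
    finSumFinEquiv.trans (finCongr (Nat.add_sub_of_le hk))
  have hCadj : ∀ i j, C i j = M.adjugate j i := fun i j => by
    rw [hC, Matrix.adjugate_fin_succ_eq_det_submatrix]
  have h := JacobiCofactor.det_toBlocks₁₁_adjugate (M.submatrix e e)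
  rw [Matrix.adjugate_submatrix_equiv_self, Matrix.det_submatrix_equiv_self, Fintype.card_fin,
    ← Matrix.det_transpose] at h
  convert h using 2
  · ext i j
    exact hCadj _ _
  · rfl
end

section
/- Let ℓ12, ℓ13, ℓ14, ℓ23, ℓ24, ℓ34 be positive real numbers, E the 4 × 4 symmetric matrix with unit diagonal and off-diagonal entries cosh(ℓ_{ij}), and c_{ij} its cofactors. Define cosA = (cosh ℓ14·cosh ℓ24 − cosh ℓ12)/(sinh ℓ14·sinh ℓ24), cosB = (cosh ℓ14·cosh ℓ34 − cosh ℓ13)/(sinh ℓ14·sinh ℓ34), and cosC = (cosh ℓ24·cosh ℓ34 − cosh ℓ23)/(sinh ℓ24·sinh ℓ34). Assume c_{11} > 0 and c_{22} > 0. Then (cosA − cosB·cosC)/(√(1 − cosB²)·√(1 − cosC²)) = −c_{12}/√(c_{11}·c_{22}). -/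
/-!
Bringing each expression over a common denominator and using `sinh² = cosh² - 1` turns
the left-hand side into cofactors:
`1 - cosC² = c₁₁ / (sinh ℓ₂₄ sinh ℓ₃₄)²`, `1 - cosB² = c₂₂ / (sinh ℓ₁₄ sinh ℓ₃₄)²` and
`cosA - cosB cosC = -c₁₂ / (sinh ℓ₁₄ sinh ℓ₂₄ sinh² ℓ₃₄)`. Since the hyperbolic sines are positive,
they leave the square roots and cancel.
-/

open Real

/-- The edge matrix of six real parameters: the 4 × 4 symmetric matrix with unit
diagonal and off-diagonal entries `cosh ℓᵢⱼ`. -/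
noncomputable def edgeMatrix (l12 l13 l14 l23 l24 l34 : ℝ) : Matrix (Fin 4) (Fin 4) ℝ :=
  !![1, cosh l12, cosh l13, cosh l14;
     cosh l12, 1, cosh l23, cosh l24;
     cosh l13, cosh l23, 1, cosh l34;
     cosh l14, cosh l24, cosh l34, 1]

/-- The `(i,j)`-cofactor of the edge matrix (0-based indices). -/
noncomputable def cof (l12 l13 l14 l23 l24 l34 : ℝ) (i j : Fin 4) : ℝ :=
  (-1 : ℝ) ^ (i.val + j.val) *
    ((edgeMatrix l12 l13 l14 l23 l24 l34).submatrix i.succAbove j.succAbove).det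

/-- The squared sine of an angle of a hyperbolic triangle, as given by the law of cosines: the
numerator is a principal `3 × 3` minor of the edge matrix. The letters `s, t` stand for the hyperbolic sines of
the two adjacent sides, `y, z` for their hyperbolic cosines, `w` for that of the opposite side. -/
lemma one_sub_cos_sq {s t y z w : ℝ} (hs : s ≠ 0) (ht : t ≠ 0)
    (hsy : s ^ 2 = y ^ 2 - 1) (htz : t ^ 2 = z ^ 2 - 1) :
    1 - ((y * z - w) / (s * t)) ^ 2 =
      (1 + 2 * w * y * z - w ^ 2 - y ^ 2 - z ^ 2) / (s * t) ^ 2 := by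
  rw [div_pow, eq_div_iff (by positivity), sub_mul, div_mul_cancel₀ _ (by positivity),
    mul_pow, hsy, htz]
  ring

/-- The cosine rule for a hyperbolic tetrahedron: the cosine of the dihedral angle
`θ₃₄`, computed by the spherical law of cosines from the face angles at vertex 4,
equals `−c₁₂/√(c₁₁·c₂₂)`. -/
theorem cos_dihedral_eq_cofactor_ratio (l12 l13 l14 l23 l24 l34 : ℝ)
    (h12 : 0 < l12) (h13 : 0 < l13) (h14 : 0 < l14)
    (h23 : 0 < l23) (h24 : 0 < l24) (h34 : 0 < l34)
    (hc11 : 0 < cof l12 l13 l14 l23 l24 l34 0 0)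
    (hc22 : 0 < cof l12 l13 l14 l23 l24 l34 1 1)
    (cosA cosB cosC : ℝ)
    (hA : cosA = (cosh l14 * cosh l24 - cosh l12) / (sinh l14 * sinh l24))
    (hB : cosB = (cosh l14 * cosh l34 - cosh l13) / (sinh l14 * sinh l34))
    (hC : cosC = (cosh l24 * cosh l34 - cosh l23) / (sinh l24 * sinh l34)) :
    (cosA - cosB * cosC) / (Real.sqrt (1 - cosB ^ 2) * Real.sqrt (1 - cosC ^ 2)) =
      -(cof l12 l13 l14 l23 l24 l34 0 1) /
        Real.sqrt (cof l12 l13 l14 l23 l24 l34 0 0 * cof l12 l13 l14 l23 l24 l34 1 1) := by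
  have p14 := sinh_pos_iff.2 h14
  have p24 := sinh_pos_iff.2 h24
  have p34 := sinh_pos_iff.2 h34
  have e11 : cof l12 l13 l14 l23 l24 l34 0 0 =
      1 + 2 * cosh l23 * cosh l24 * cosh l34 - cosh l23 ^ 2 - cosh l24 ^ 2 - cosh l34 ^ 2 := by
    simp [cof, edgeMatrix, Matrix.det_fin_three]
    ring
  have e22 : cof l12 l13 l14 l23 l24 l34 1 1 =
      1 + 2 * cosh l13 * cosh l14 * cosh l34 - cosh l13 ^ 2 - cosh l14 ^ 2 - cosh l34 ^ 2 := by
    simp [cof, edgeMatrix, Matrix.det_fin_three, Fin.succAbove, Fin.lt_def]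
    ring
  have e12 : -cof l12 l13 l14 l23 l24 l34 0 1 =
      (cosh l14 * cosh l24 - cosh l12) * (cosh l34 ^ 2 - 1) -
        (cosh l14 * cosh l34 - cosh l13) * (cosh l24 * cosh l34 - cosh l23) := by
    simp [cof, edgeMatrix, Matrix.det_fin_three, Fin.succAbove, Fin.lt_def]
    ring
  have hB' : 1 - cosB ^ 2 =
      cof l12 l13 l14 l23 l24 l34 1 1 / (sinh l14 * sinh l34) ^ 2 := by
    rw [hB, e22]
    exact one_sub_cos_sq p14.ne' p34.ne' (sinh_sq l14) (sinh_sq l34)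
  have hC' : 1 - cosC ^ 2 =
      cof l12 l13 l14 l23 l24 l34 0 0 / (sinh l24 * sinh l34) ^ 2 := by
    rw [hC, e11]
    exact one_sub_cos_sq p24.ne' p34.ne' (sinh_sq l24) (sinh_sq l34)
  have hnum : cosA - cosB * cosC =
      -cof l12 l13 l14 l23 l24 l34 0 1 / (sinh l14 * sinh l24 * sinh l34 ^ 2) := by
    rw [e12, ← sinh_sq, hA, hB, hC]
    field_simp
  rw [hnum, hB', hC', sqrt_div hc22.le, sqrt_div hc11.le, sqrt_sq (by positivity),
    sqrt_sq (by positivity), sqrt_mul hc11.le]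
  have q11 := sqrt_pos.2 hc11
  have q22 := sqrt_pos.2 hc22
  field_simp
end

section
/- Let v₁, v₂, v₃, v₄ ∈ ℝ⁴ be linearly independent vectors lying on the upper hyperboloid {x ∈ ℝ⁴ : B(x,x) = 1, x₀ > 0} of the Lorentzian form B(x,y) = x₀y₀ − x₁y₁ − x₂y₂ − x₃y₃, and let E be the 4 × 4 matrix with entries E_{ij} = B(v_i, v_j) (so E_{ii} = 1). Then det E < 0, and every diagonal cofactor c_{ii} of E is positive (i = 1, 2, 3, 4). -/
/-!
Let `V` be the matrix with rows `v₁, …, v₄` and `D = diag(1, -1, -1, -1)`, so that `E = V D Vᵀ`.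
Then `det E = -(det V)² < 0`. The cofactor `cᵢᵢ` is the diagonal entry `i` of
`adj E = (adj V)ᵀ (adj D) (adj V)`, and `adj D = -D`; hence `cᵢᵢ = -B(n, n)`, where `n` is column `i`
of `adj V`. The identity `V (adj V) = det V • 1` shows that `n` is nonzero and Euclidean-orthogonal
to every `vⱼ` with `j ≠ i`. Since `vⱼ` is timelike, Cauchy–Schwarz forces `n` to be spacelike.
-/

open Real

/-- The standard Lorentzian bilinear form on `ℝ⁴`:
`B(x,y) = x₀y₀ − x₁y₁ − x₂y₂ − x₃y₃`. -/
def lorentzForm (x y : Fin 4 → ℝ) : ℝ :=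
  x 0 * y 0 - x 1 * y 1 - x 2 * y 2 - x 3 * y 3

/-- A nonzero vector Euclidean-orthogonal to a unit timelike vector is spacelike. (Flipping the
signs of its last three coordinates, which leaves `lorentzForm n n` unchanged, turns Euclidean
orthogonality into Lorentz orthogonality.) -/
lemma lorentzForm_self_neg_of_orthogonal (a n : Fin 4 → ℝ) (ha : lorentzForm a a = 1)
    (hn : n ≠ 0) (h : ∑ k, a k * n k = 0) : lorentzForm n n < 0 := by
  unfold lorentzForm at *
  rw [Fin.sum_univ_four] at h
  set s := n 1 ^ 2 + n 2 ^ 2 + n 3 ^ 2 with hs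
  -- Cauchy–Schwarz for the spatial parts, in the form of Lagrange's identity.
  have hcs : (a 0 * n 0) ^ 2 ≤ (a 0 ^ 2 - 1) * s := by
    have h0 : a 0 * n 0 = -(a 1 * n 1 + a 2 * n 2 + a 3 * n 3) := by linarith
    have h1 : a 0 ^ 2 - 1 = a 1 ^ 2 + a 2 ^ 2 + a 3 ^ 2 := by linarith
    rw [h0, h1, hs]
    nlinarith [sq_nonneg (a 1 * n 2 - a 2 * n 1), sq_nonneg (a 1 * n 3 - a 3 * n 1),
      sq_nonneg (a 2 * n 3 - a 3 * n 2)]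
  have ha0 : 0 < a 0 ^ 2 := by
    nlinarith [sq_nonneg (a 1), sq_nonneg (a 2), sq_nonneg (a 3)]
  have hspos : 0 < s := by
    by_contra hle
    have e1 : n 1 = 0 := by nlinarith [sq_nonneg (n 1), sq_nonneg (n 2), sq_nonneg (n 3)]
    have e2 : n 2 = 0 := by nlinarith [sq_nonneg (n 1), sq_nonneg (n 2), sq_nonneg (n 3)]
    have e3 : n 3 = 0 := by nlinarith [sq_nonneg (n 1), sq_nonneg (n 2), sq_nonneg (n 3)]
    have e0 : n 0 = 0 := by
      have : a 0 * n 0 = 0 := by simpa [e1, e2, e3] using h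
      rcases mul_eq_zero.mp this with h' | h'
      · simp [h'] at ha0
      · exact h'
    apply hn
    ext k
    fin_cases k <;> simp [e0, e1, e2, e3]
  have key : 0 < a 0 ^ 2 * (s - n 0 ^ 2) := by nlinarith
  have := pos_of_mul_pos_right key ha0.le
  nlinarith

/-- For four linearly independent points of the upper hyperboloid model of `ℍ³`,
the Gram matrix `E = (B(vᵢ,vⱼ))` (the edge matrix of the hyperbolic tetrahedron with
vertices `v₁,…,v₄`) has negative determinant and positive diagonal cofactors. -/
theorem edgeMatrix_det_neg_and_diag_cofactors_pos (v1 v2 v3 v4 : Fin 4 → ℝ)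
    (hli : LinearIndependent ℝ ![v1, v2, v3, v4])
    (h1 : lorentzForm v1 v1 = 1 ∧ 0 < v1 0)
    (h2 : lorentzForm v2 v2 = 1 ∧ 0 < v2 0)
    (h3 : lorentzForm v3 v3 = 1 ∧ 0 < v3 0)
    (h4 : lorentzForm v4 v4 = 1 ∧ 0 < v4 0)
    (E : Matrix (Fin 4) (Fin 4) ℝ)
    (hE : ∀ i j : Fin 4, E i j = lorentzForm (![v1, v2, v3, v4] i) (![v1, v2, v3, v4] j)) :
    E.det < 0 ∧
    ∀ i : Fin 4,
      0 < (-1 : ℝ) ^ (i.val + i.val) * (E.submatrix i.succAbove i.succAbove).det := by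
  have hunit : ∀ j, lorentzForm (![v1, v2, v3, v4] j) (![v1, v2, v3, v4] j) = 1 := by
    intro j
    fin_cases j
    exacts [h1.1, h2.1, h3.1, h4.1]
  generalize ![v1, v2, v3, v4] = v at hli hE hunit
  let V : Matrix (Fin 4) (Fin 4) ℝ := Matrix.of v
  let D : Matrix (Fin 4) (Fin 4) ℝ := Matrix.diagonal ![1, -1, -1, -1]
  have hV : V.det ≠ 0 := by
    have : IsUnit V := Matrix.linearIndependent_rows_iff_isUnit.mp hli
    exact ((Matrix.isUnit_iff_isUnit_det V).mp this).ne_zero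
  have hEV : E = V * D * V.transpose := by
    ext i j
    rw [hE, Matrix.mul_apply, Fin.sum_univ_four]
    simp [V, D, lorentzForm]
    ring
  have hD : D.det = -1 := by
    simp [D, Matrix.det_diagonal, Fin.prod_univ_four]
  have hadjD : D.adjugate = -D := by
    have hDD : D * D = 1 := by
      ext i j
      fin_cases i <;> fin_cases j <;> simp [D]
    calc D.adjugate = D.adjugate * (D * D) := by rw [hDD, mul_one]
      _ = -D := by rw [← mul_assoc, Matrix.adjugate_mul, hD]; simp
  refine ⟨?_, fun i => ?_⟩
  · rw [hEV, Matrix.det_mul, Matrix.det_mul, Matrix.det_transpose, hD]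
    have := mul_self_pos.mpr hV
    linarith
  · rw [← Matrix.adjugate_fin_succ_eq_det_submatrix E i i]
    let n : Fin 4 → ℝ := fun k => V.adjugate k i
    have hadj : ∀ j, ∑ k, v j k * n k = V.det * (1 : Matrix (Fin 4) (Fin 4) ℝ) j i := by
      intro j
      have := congrFun (congrFun (Matrix.mul_adjugate V) j) i
      rwa [Matrix.mul_apply, Matrix.smul_apply, smul_eq_mul] at this
    have hn : n ≠ 0 := by
      intro h0
      have := hadj i
      simp [h0] at this
      exact hV this.symm
    have hc : E.adjugate i i = -lorentzForm n n := by
      rw [hEV, Matrix.adjugate_mul_distrib, Matrix.adjugate_mul_distrib, hadjD,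
        ← Matrix.adjugate_transpose, ← mul_assoc, Matrix.mul_apply, Fin.sum_univ_four]
      simp [D, n, lorentzForm]
      ring
    obtain ⟨j, hj⟩ := exists_ne i
    have := lorentzForm_self_neg_of_orthogonal (v j) n (hunit j) hn (by
      rw [hadj, Matrix.one_apply_ne hj, mul_zero])
    rw [hc]
    linarith
end

section
/- Fix positive real numbers ℓ12, ℓ13, ℓ14, ℓ23, ℓ24, and for t > 0 let E(t) be the 4 × 4 symmetric matrix with unit diagonal, entries cosh(ℓ_{ij}) for the pairs (1,2), (1,3), (1,4), (2,3), (2,4), and (3,4)-entry cosh t. Let c_{ij}(t) denote the cofactors of E(t) and Δ(t) = det E(t). Suppose at a point t > 0 that Δ(t) < 0, c_{33} > 0 and c_{44} > 0 (note c_{33}, c_{44} do not depend on t). Then the function θ12 : s ↦ arccos(−c_{34}(s)/√(c_{33}·c_{44})) is differentiable at t with derivative θ12'(t) = sinh ℓ12 · sinh t / √(−Δ(t)). -/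
/-!
The cofactor `c₃₄` is affine in `cosh t`, with leading coefficient `sinh² ℓ₁₂`
(`cofT_two_three`). Hence the argument of `arccos` has derivative
`-sinh² ℓ₁₂ · sinh t / √(c₃₃ c₄₄)`, and the chain rule gives
`θ₁₂' = sinh² ℓ₁₂ · sinh t / √(c₃₃ c₄₄ - c₃₄²)`. Jacobi's identity for complementary minors,
`c₃₃ c₄₄ - c₃₄² = Δ · (1 - cosh² ℓ₁₂) = -Δ · sinh² ℓ₁₂` (`cofT_jacobi`), turns the denominator
into `sinh ℓ₁₂ · √(-Δ)`. It also shows `c₃₄² < c₃₃ c₄₄`, so the argument of `arccos` lies strictly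
between `-1` and `1`, where `arccos` is differentiable.
-/

open Real

/-- The edge matrix with varying sixth edge length: the 4 × 4 symmetric matrix with
unit diagonal, entries `cosh ℓᵢⱼ` for the pairs `(1,2), (1,3), (1,4), (2,3), (2,4)`,
and `(3,4)`-entry `cosh t`. -/
noncomputable def edgeMatrixT (l12 l13 l14 l23 l24 : ℝ) (t : ℝ) :
    Matrix (Fin 4) (Fin 4) ℝ :=
  !![1, cosh l12, cosh l13, cosh l14;
     cosh l12, 1, cosh l23, cosh l24;
     cosh l13, cosh l23, 1, cosh t;
     cosh l14, cosh l24, cosh t, 1]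

/-- The `(i,j)`-cofactor of `edgeMatrixT … t` (0-based indices), as a function of `t`. -/
noncomputable def cofT (l12 l13 l14 l23 l24 : ℝ) (i j : Fin 4) (t : ℝ) : ℝ :=
  (-1 : ℝ) ^ (i.val + j.val) *
    ((edgeMatrixT l12 l13 l14 l23 l24 t).submatrix i.succAbove j.succAbove).det

theorem cofT_two_three (l12 l13 l14 l23 l24 s : ℝ) :
    cofT l12 l13 l14 l23 l24 2 3 s = sinh l12 ^ 2 * cosh s +
      (cosh l13 * cosh l14 + cosh l23 * cosh l24
        - cosh l12 * (cosh l13 * cosh l24 + cosh l23 * cosh l14)) := by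
  rw [sinh_sq]
  simp [cofT, edgeMatrixT, Matrix.det_fin_three, Fin.succAbove]
  ring

/-- Jacobi's identity for the complementary minors on the index pairs `{3,4}` and `{1,2}`. -/
theorem cofT_jacobi (l12 l13 l14 l23 l24 t : ℝ) :
    cofT l12 l13 l14 l23 l24 2 2 t * cofT l12 l13 l14 l23 l24 3 3 t
      - cofT l12 l13 l14 l23 l24 2 3 t ^ 2
      = sinh l12 ^ 2 * -(edgeMatrixT l12 l13 l14 l23 l24 t).det := by
  rw [cofT_two_three, sinh_sq, Matrix.det_succ_row_zero]
  simp [cofT, edgeMatrixT, Matrix.det_fin_three, Fin.sum_univ_four, Fin.succAbove]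
  ring

/-- The derivative of the dihedral angle `θ₁₂ = arccos(−c₃₄(t)/√(c₃₃·c₄₄))` with
respect to the varying edge length `ℓ₃₄ = t` is `sinh ℓ₁₂ · sinh t / √(−Δ(t))`.
(The cofactors `c₃₃, c₄₄` do not depend on `t`.) -/
theorem deriv_theta12 (l12 l13 l14 l23 l24 : ℝ)
    (h12 : 0 < l12) (h13 : 0 < l13) (h14 : 0 < l14)
    (h23 : 0 < l23) (h24 : 0 < l24) (t : ℝ) (ht : 0 < t)
    (hΔ : (edgeMatrixT l12 l13 l14 l23 l24 t).det < 0)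
    (hc33 : 0 < cofT l12 l13 l14 l23 l24 2 2 t)
    (hc44 : 0 < cofT l12 l13 l14 l23 l24 3 3 t) :
    HasDerivAt
      (fun s => Real.arccos (-(cofT l12 l13 l14 l23 l24 2 3 s) /
        Real.sqrt (cofT l12 l13 l14 l23 l24 2 2 t * cofT l12 l13 l14 l23 l24 3 3 t)))
      (sinh l12 * sinh t / Real.sqrt (-(edgeMatrixT l12 l13 l14 l23 l24 t).det)) t := by
  have hs : 0 < sinh l12 := sinh_pos_iff.2 h12
  have hJ := cofT_jacobi l12 l13 l14 l23 l24 t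
  have hd : HasDerivAt (cofT l12 l13 l14 l23 l24 2 3) (sinh l12 ^ 2 * sinh t) t := by
    rw [funext (cofT_two_three l12 l13 l14 l23 l24)]
    exact ((hasDerivAt_cosh t).const_mul _).add_const _
  set D := -(edgeMatrixT l12 l13 l14 l23 l24 t).det with hD
  have hDpos : 0 < D := by linarith
  set P := cofT l12 l13 l14 l23 l24 2 2 t * cofT l12 l13 l14 l23 l24 3 3 t with hP
  have hPpos : 0 < P := mul_pos hc33 hc44
  have hR : 0 < √P := sqrt_pos.2 hPpos
  set c := cofT l12 l13 l14 l23 l24 2 3 t with hc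
  have hone : 1 - (-c / √P) ^ 2 = sinh l12 ^ 2 * D / P := by
    rw [div_pow, sq_sqrt hPpos.le, ← hJ]
    field_simp
  have hpos : 0 < 1 - (-c / √P) ^ 2 := by rw [hone]; positivity
  have hlt := abs_lt.1 ((sq_lt_one_iff_abs_lt_one _).1 (sub_pos.1 hpos))
  have key := (hasDerivAt_arccos hlt.1.ne' hlt.2.ne).comp t (hd.neg.div_const √P)
  refine key.congr_deriv ?_
  have hsq : √(1 - (-c / √P) ^ 2) = sinh l12 * √D / √P := by
    rw [hone, sqrt_div (by positivity), sqrt_mul (by positivity), sqrt_sq hs.le]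
  have hDs : 0 < √D := sqrt_pos.2 hDpos
  rw [hsq]
  field_simp
end

section
/- Let ℓ12, ℓ13, ℓ14, ℓ23, ℓ24, ℓ34 be real numbers, E the 4 × 4 symmetric matrix with unit diagonal and off-diagonal entries cosh(ℓ_{ij}), c_{ij} its cofactors and Δ = det E. If c_{11} > 0, c_{22} > 0, sinh ℓ34 ≠ 0, and c_{12}² < c_{11}·c_{22}, then Δ < 0. -/
/-! By Jacobi's complementary-minor identity, the `2 × 2` minor
`c₁₁ c₂₂ - c₁₂²` of the cofactor matrix is the determinant `Δ` times the complementary minor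
`1 - cosh² ℓ₃₄ = -sinh² ℓ₃₄` of the edge matrix. Since `c₁₁ c₂₂ - c₁₂² > 0` and
`sinh² ℓ₃₄ > 0`, it follows that `Δ < 0`. -/

open Real

/-- Jacobi's identity for the `2 × 2` minor of the cofactor matrix on its first two rows and columns. -/
theorem cof_mul_cof_sub_sq (l12 l13 l14 l23 l24 l34 : ℝ) :
    cof l12 l13 l14 l23 l24 l34 0 0 * cof l12 l13 l14 l23 l24 l34 1 1 -
        cof l12 l13 l14 l23 l24 l34 0 1 ^ 2 =
      -((edgeMatrix l12 l13 l14 l23 l24 l34).det * sinh l34 ^ 2) := by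
  rw [sinh_sq]
  simp [cof, edgeMatrix, Matrix.det_succ_row_zero, Fin.sum_univ_succ, Fin.succAbove]
  ring

/-- If `c₁₁ > 0`, `c₂₂ > 0`, `sinh ℓ₃₄ ≠ 0` and `c₁₂² < c₁₁·c₂₂`, then the determinant
of the edge matrix is negative. -/
theorem det_edgeMatrix_neg (l12 l13 l14 l23 l24 l34 : ℝ)
    (hc11 : 0 < cof l12 l13 l14 l23 l24 l34 0 0)
    (hc22 : 0 < cof l12 l13 l14 l23 l24 l34 1 1)
    (hs : sinh l34 ≠ 0)
    (hlt : cof l12 l13 l14 l23 l24 l34 0 1 ^ 2 <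
      cof l12 l13 l14 l23 l24 l34 0 0 * cof l12 l13 l14 l23 l24 l34 1 1) :
    (edgeMatrix l12 l13 l14 l23 l24 l34).det < 0 := by
  have hJ := cof_mul_cof_sub_sq l12 l13 l14 l23 l24 l34
  have hpos : 0 < sinh l34 ^ 2 := by positivity
  exact neg_of_mul_neg_left (by linarith) hpos.le
end
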